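/- Let (Ω, Σ, μ) be a finite nonatomic measure space. Then the Fréchet–Nikodym metric space X of equivalence classes of measurable sets (A ~ B iff μ(A Δ B) = 0) with metric d(A,B) = μ(A Δ B) is connected. -/

import Mathlib

open MeasureTheory

open Filter Topology ENNReal symmDiff

section

variable {Ω : Type*} [MeasurableSpace Ω] (μ : Measure Ω) [IsFiniteMeasure μ]

/-- In a nonatomic finite measure space, every set of positive measure has measurable subsets of
arbitrarily small positive measure. -/
theorem exists_subset_measure_pos_lt
    (hna : ∀ A : Set Ω, MeasurableSet A → 0 < μ A →
      ∃ B ⊆ A, MeasurableSet B ∧ 0 < μ B ∧ μ B < μ A)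
    {A : Set Ω} (hA : MeasurableSet A) (hpos : 0 < μ A) {ε : ℝ≥0∞} (hε : 0 < ε) :
    ∃ B ⊆ A, MeasurableSet B ∧ 0 < μ B ∧ μ B < ε := by
  have key : ∀ n : ℕ, ∃ B ⊆ A, MeasurableSet B ∧ 0 < μ B ∧ μ B ≤ μ A * (2⁻¹) ^ n := by
    intro n
    induction n with
    | zero => exact ⟨A, subset_rfl, hA, hpos, by simp⟩
    | succ n ih =>
      obtain ⟨B, hBA, hB, hBpos, hBle⟩ := ih
      suffices h : ∃ C ⊆ B, MeasurableSet C ∧ 0 < μ C ∧ μ C ≤ μ B * 2⁻¹ by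
        obtain ⟨C, hCB, hC, hCpos, hCle⟩ := h
        refine ⟨C, hCB.trans hBA, hC, hCpos, hCle.trans ?_⟩
        rw [pow_succ, ← mul_assoc]
        gcongr
      obtain ⟨C, hCB, hC, hCpos, hClt⟩ := hna B hB hBpos
      have hdiff : μ (B \ C) = μ B - μ C :=
        measure_sdiff hCB hC.nullMeasurableSet (measure_ne_top μ C)
      rcases le_total (μ C) (μ B * 2⁻¹) with h | h
      · exact ⟨C, hCB, hC, hCpos, h⟩
      · refine ⟨B \ C, Set.sdiff_subset, hB.diff hC, ?_, ?_⟩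
        · rw [hdiff]
          exact tsub_pos_of_lt hClt
        · rw [hdiff, tsub_le_iff_right]
          calc μ B = μ B * 2⁻¹ + μ B * 2⁻¹ := by
                rw [← mul_add, ENNReal.inv_two_add_inv_two, mul_one]
            _ ≤ μ B * 2⁻¹ + μ C := by gcongr
  have hlim : Tendsto (fun n : ℕ ↦ μ A * (2⁻¹ : ℝ≥0∞) ^ n) atTop (𝓝 0) := by
    have := ENNReal.Tendsto.const_mul (a := μ A)
      (ENNReal.tendsto_pow_atTop_nhds_zero_of_lt_one ENNReal.one_half_lt_one)
      (Or.inr (measure_ne_top μ A))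
    simpa using this
  obtain ⟨n, hn⟩ := (hlim.eventually_lt_const hε).exists
  obtain ⟨B, hBA, hB, hBpos, hBle⟩ := key n
  exact ⟨B, hBA, hB, hBpos, hBle.trans_lt hn⟩

/-- A nonempty family of sets closed under increasing countable unions has an element which is
maximal up to sets of measure zero. -/
theorem exists_measure_maximal_of_iUnion_closed {P : Set Ω → Prop}
    (hP : ∀ B : ℕ → Set Ω, Monotone B → (∀ n, P (B n)) → P (⋃ n, B n))
    {B₀ : Set Ω} (h₀ : P B₀) :
    ∃ B, P B ∧ ∀ C, P C → B ⊆ C → μ C ≤ μ B := by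
  have step : ∀ (n : ℕ) (B : {B // P B}), ∃ C : {C // P C}, B.1 ⊆ C.1 ∧
      ∀ D, P D → B.1 ⊆ D → μ D ≤ μ C.1 + (n : ℝ≥0∞)⁻¹ := by
    intro n B
    by_contra! hcon
    choose! D hPD hBD hD using hcon
    set s : ℝ≥0∞ := ⨆ C : {C : Set Ω // P C ∧ B.1 ⊆ C}, μ C.1 with hs
    have hs_top : s ≠ ∞ :=
      ((iSup_le fun C ↦ measure_mono (Set.subset_univ _)).trans_lt (measure_lt_top μ Set.univ)).ne
    have hle : ∀ C : {C : Set Ω // P C ∧ B.1 ⊆ C}, μ C.1 + (n : ℝ≥0∞)⁻¹ ≤ s := fun C ↦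
      (hD ⟨C.1, C.2.1⟩ C.2.2).le.trans
        (le_iSup (fun C : {C : Set Ω // P C ∧ B.1 ⊆ C} ↦ μ C.1)
          ⟨D ⟨C.1, C.2.1⟩, hPD ⟨C.1, C.2.1⟩ C.2.2, hBD ⟨C.1, C.2.1⟩ C.2.2⟩)
    have : Nonempty {C : Set Ω // P C ∧ B.1 ⊆ C} := ⟨⟨B.1, B.2, subset_rfl⟩⟩
    have hsum : s + (n : ℝ≥0∞)⁻¹ ≤ s := by
      rw [hs, ENNReal.iSup_add]
      exact iSup_le hle
    exact (ENNReal.lt_add_right hs_top (by simp)).not_ge hsum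
  choose next hsub hnext using step
  let B : ℕ → {B // P B} := fun n ↦ Nat.rec ⟨B₀, h₀⟩ next n
  have hmono : Monotone fun n ↦ (B n).1 := monotone_nat_of_le_succ fun n ↦ hsub n (B n)
  refine ⟨⋃ n, (B n).1, hP _ hmono fun n ↦ (B n).2, fun C hC hBC ↦ ?_⟩
  have hle : ∀ n : ℕ, μ C ≤ μ (⋃ n, (B n).1) + (n : ℝ≥0∞)⁻¹ := fun n ↦
    (hnext n (B n) C hC ((Set.subset_iUnion (fun n ↦ (B n).1) n).trans hBC)).trans <| by
      gcongr
      exact Set.subset_iUnion (fun n ↦ (B n).1) (n + 1)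
  refine ge_of_tendsto' (x := atTop) ?_ hle
  simpa using tendsto_const_nhds.add ENNReal.tendsto_inv_nat_nhds_zero

end

/-- For a finite nonatomic measure space, the Fréchet–Nikodym
space (realized as the set of indicator functions inside `L¹(μ)`) is connected. -/
theorem stmt9 {Ω : Type*} [MeasurableSpace Ω] (μ : Measure Ω) [IsFiniteMeasure μ]
    (hna : ∀ A : Set Ω, MeasurableSet A → 0 < μ A →
      ∃ B ⊆ A, MeasurableSet B ∧ 0 < μ B ∧ μ B < μ A) :
    IsConnected {f : Lp ℝ 1 μ |
      ∃ (A : Set Ω) (hA : MeasurableSet A),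
        f = indicatorConstLp 1 hA (measure_ne_top μ A) (1 : ℝ)} := by
  set X : Set (Lp ℝ 1 μ) := {f : Lp ℝ 1 μ |
      ∃ (A : Set Ω) (hA : MeasurableSet A),
        f = indicatorConstLp 1 hA (measure_ne_top μ A) (1 : ℝ)}
  let χ : {A : Set Ω // MeasurableSet A} → X := fun A ↦
    ⟨indicatorConstLp 1 A.2 (measure_ne_top μ A.1) (1 : ℝ), A.1, A.2, rfl⟩
  have χ_tendsto : ∀ (B : ℕ → {A : Set Ω // MeasurableSet A}) (A : {A : Set Ω // MeasurableSet A}),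
      Tendsto (fun n ↦ μ ((B n).1 ∆ A.1)) atTop (𝓝 0) →
      Tendsto (fun n ↦ χ (B n)) atTop (𝓝 (χ A)) := fun B A h ↦
    tendsto_subtype_rng.2 (tendsto_indicatorConstLp_set
      (ht := fun n ↦ (B n).2) (hμt := fun n ↦ measure_ne_top μ (B n).1) (hs := A.2)
      (hμs := measure_ne_top μ A.1) ENNReal.one_ne_top h)
  have clopen_univ : ∀ s : Set X, IsClopen s → χ ⟨∅, .empty⟩ ∈ s → s = Set.univ := by
    intro s hs h_empty
    refine Set.eq_univ_of_forall ?_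
    rintro ⟨_, A, hA, rfl⟩
    obtain ⟨B, ⟨hB, hBA, hBs⟩, hmax⟩ := exists_measure_maximal_of_iUnion_closed μ
      (P := fun B ↦ ∃ hB : MeasurableSet B, B ⊆ A ∧ χ ⟨B, hB⟩ ∈ s) (B₀ := ∅)
      (fun B hmono hB ↦ by
        choose hBm hBA hBs using hB
        refine ⟨.iUnion hBm, Set.iUnion_subset hBA,
          hs.isClosed.mem_of_tendsto (χ_tendsto (fun n ↦ ⟨B n, hBm n⟩) ⟨_, .iUnion hBm⟩ ?_)
            (Eventually.of_forall hBs)⟩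
        have hdiff : ∀ n, μ (B n ∆ ⋃ k, B k) = μ (⋃ k, B k) - μ (B n) := fun n ↦ by
          rw [symmDiff_of_le (Set.subset_iUnion B n),
            measure_sdiff (Set.subset_iUnion B n) (hBm n).nullMeasurableSet (measure_ne_top μ _)]
        simp only [hdiff]
        simpa using ENNReal.Tendsto.sub tendsto_const_nhds (tendsto_measure_iUnion_atTop (μ := μ) hmono)
          (Or.inl (measure_ne_top μ (⋃ k, B k))))
      ⟨.empty, Set.empty_subset A, h_empty⟩
    have hAB : μ (A \ B) = 0 := by
      by_contra hne
      have hsmall : ∀ n : ℕ, ∃ D ⊆ A \ B, MeasurableSet D ∧ 0 < μ D ∧ μ D < (n : ℝ≥0∞)⁻¹ :=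
        fun n ↦ exists_subset_measure_pos_lt μ hna (hA.diff hB) (pos_iff_ne_zero.2 hne) (by simp)
      choose D hDAB hD hDpos hDlt using hsmall
      have hdisj : ∀ n, Disjoint B (D n) := fun n ↦
        Set.disjoint_sdiff_right.mono_right (hDAB n)
      have hlim : Tendsto (fun n ↦ χ ⟨B ∪ D n, hB.union (hD n)⟩) atTop (𝓝 (χ ⟨B, hB⟩)) := by
        refine χ_tendsto _ _ (tendsto_of_tendsto_of_tendsto_of_le_of_le tendsto_const_nhds
          ENNReal.tendsto_inv_nat_nhds_zero (fun _ ↦ zero_le) fun n ↦ ?_)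
        rw [symmDiff_comm, symmDiff_of_le (show B ≤ B ∪ D n from Set.subset_union_left)]
        exact (measure_mono (by simp [Set.union_sdiff_left])).trans (hDlt n).le
      obtain ⟨n, hn⟩ := (hlim.eventually (hs.isOpen.mem_nhds hBs)).exists
      have hle := hmax (B ∪ D n) ⟨hB.union (hD n),
        Set.union_subset hBA ((hDAB n).trans Set.sdiff_subset), hn⟩ Set.subset_union_left
      rw [measure_union (hdisj n) (hD n)] at hle
      exact (ENNReal.lt_add_right (measure_ne_top μ B) (hDpos n).ne').not_ge hle
    refine hs.isClosed.mem_of_tendsto (χ_tendsto (fun _ ↦ ⟨B, hB⟩) ⟨A, hA⟩ ?_)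
      (Eventually.of_forall fun _ ↦ hBs)
    simp only [symmDiff_of_le hBA, hAB, tendsto_const_nhds]
  refine ⟨⟨_, (χ ⟨∅, .empty⟩).2⟩, isPreconnected_iff_preconnectedSpace.2 ?_⟩
  refine preconnectedSpace_iff_clopen.2 fun s hs ↦ ?_
  by_cases h : χ ⟨∅, .empty⟩ ∈ s
  · exact Or.inr (clopen_univ s hs h)
  · exact Or.inl (Set.compl_univ_iff.1 (clopen_univ sᶜ hs.compl h))
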